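/- Let Ω and X be compact metric spaces and let Φ be a skew-product transformation on Ω×X with continuous base φ: Ω → Ω satisfying condition (H). Let a ∈ ℝ and let f: Ω×X → ℝ be a bounded Borel measurable function such that μ(D_f) = 0 and ∫_{Ω×X} f dμ ≥ a for every Φ-invariant Borel probability measure μ on Ω×X. Then for every ε > 0 there exists N ∈ ℕ such that for all n ≥ N and all (ω,x) ∈ Ω×X, (1/n) Σ_{i=0}^{n-1} f(Φ^i(ω,x)) ≥ a − ε. -/

import Mathlib

open MeasureTheory Filter Topology

lemma spt_tendsto_integral {E : Type*} [MetricSpace E] [MeasurableSpace E] [BorelSpace E]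
    {μs : ℕ → ProbabilityMeasure E} {μ : ProbabilityMeasure E} (h : Tendsto μs atTop (𝓝 μ))
    (g : E → ℝ) (hg : Measurable g) (C : ℝ) (hC : ∀ p, |g p| ≤ C)
    (h0 : (μ : Measure E) {p | ¬ ContinuousAt g p} = 0) :
    Tendsto (fun k => ∫ x, g x ∂(μs k : Measure E)) atTop (𝓝 (∫ x, g x ∂(μ : Measure E))) := by
  have hmap : Tendsto (fun k => (μs k).map hg.aemeasurable) atTop (𝓝 (μ.map hg.aemeasurable)) := by
    refine tendsto_of_forall_isClosed_limsup_le' fun F hF => ?_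
    have h1 : ∀ k, ((μs k).map hg.aemeasurable : Measure ℝ) F ≤ (μs k : Measure E) (closure (g ⁻¹' F)) := by
      intro k
      rw [ProbabilityMeasure.map_apply' _ _ hF.measurableSet]
      exact measure_mono subset_closure
    calc limsup (fun k => ((μs k).map hg.aemeasurable : Measure ℝ) F) atTop
        ≤ limsup (fun k => (μs k : Measure E) (closure (g ⁻¹' F))) atTop :=
          limsup_le_limsup (Eventually.of_forall h1)
      _ ≤ (μ : Measure E) (closure (g ⁻¹' F)) :=
          ProbabilityMeasure.limsup_measure_closed_le_of_tendsto h isClosed_closure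
      _ ≤ (μ : Measure E) (g ⁻¹' F ∪ {p | ¬ ContinuousAt g p}) := by
          refine measure_mono fun x hx => ?_
          by_cases hc : ContinuousAt g x
          · left
            have := hc.continuousWithinAt.mem_closure_image (s := g ⁻¹' F) hx
            exact hF.closure_subset_iff.2 (Set.image_preimage_subset g F) this
          · right; exact hc
      _ ≤ (μ : Measure E) (g ⁻¹' F) + (μ : Measure E) {p | ¬ ContinuousAt g p} := measure_union_le _ _
      _ = (μ.map hg.aemeasurable : Measure ℝ) F := by
          rw [h0, add_zero, ProbabilityMeasure.map_apply' _ _ hF.measurableSet]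
  let c : BoundedContinuousFunction ℝ ℝ := BoundedContinuousFunction.ofNormedAddCommGroup
    (fun t : ℝ => max (-|C|) (min t |C|)) (by fun_prop) |C| (by
      intro t
      rw [Real.norm_eq_abs, abs_le]
      exact ⟨le_max_left _ _, max_le (by linarith [abs_nonneg C]) (min_le_right _ _)⟩)
  have hc : ∀ p, c (g p) = g p := by
    intro p
    have := (abs_le.1 ((hC p).trans (le_abs_self C)))
    change max (-|C|) (min (g p) |C|) = g p
    rw [min_eq_left this.2, max_eq_right this.1]
  have key := (ProbabilityMeasure.tendsto_iff_forall_integral_tendsto.1 hmap) c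
  have hi : ∀ m : ProbabilityMeasure E,
      ∫ t, c t ∂(m.map hg.aemeasurable : Measure ℝ) = ∫ x, g x ∂(m : Measure E) := by
    intro m
    rw [ProbabilityMeasure.toMeasure_map, integral_map hg.aemeasurable
      c.continuous.aestronglyMeasurable]
    simp_rw [hc]
  simpa only [hi] using key

noncomputable def sptEmp {E : Type*} [MeasurableSpace E] (T : E → E) (n : ℕ) (p : E) : Measure E :=
  (n : ENNReal)⁻¹ • ∑ i ∈ Finset.range n, Measure.dirac (T^[i] p)

lemma sptEmp_prob {E : Type*} [MeasurableSpace E] (T : E → E) (n : ℕ) (hn : 0 < n) (p : E) :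
    IsProbabilityMeasure (sptEmp T n p) := by
  constructor
  simp only [sptEmp, Measure.smul_apply, Measure.finsetSum_apply, measure_univ, Finset.sum_const,
    Finset.card_range, nsmul_eq_mul, mul_one, smul_eq_mul]
  exact ENNReal.inv_mul_cancel (by simpa using hn.ne') (ENNReal.natCast_ne_top n)

lemma sptEmp_integral {E : Type*} [MeasurableSpace E] (T : E → E) (n : ℕ) (p : E)
    (g : E → ℝ) (hg : Measurable g) :
    ∫ x, g x ∂(sptEmp T n p) = (n : ℝ)⁻¹ * ∑ i ∈ Finset.range n, g (T^[i] p) := by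
  rw [sptEmp, integral_smul_measure, integral_finsetSum_measure]
  · simp [integral_dirac' _ _ hg.stronglyMeasurable]
  · intro i _
    refine ⟨hg.aestronglyMeasurable, ?_⟩
    rw [HasFiniteIntegral, lintegral_dirac' _ hg.enorm]
    exact enorm_lt_top

/-- Semi-uniform ergodic theorem (lower bound) for skew-product transformations with
discontinuous observation functions. -/
theorem semi_uniform_ergodic_theorem_SPT_ge
    {Ω X : Type*}
    [MetricSpace Ω] [CompactSpace Ω] [MeasurableSpace Ω] [BorelSpace Ω]
    [MetricSpace X] [CompactSpace X] [MeasurableSpace X] [BorelSpace X]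
    (φ : Ω → Ω) (hφ : Continuous φ)
    (Φ : Ω × X → Ω × X) (hΦmeas : Measurable Φ)
    (hbase : ∀ p : Ω × X, (Φ p).1 = φ p.1)
    (hH : ∀ ν : Measure Ω, IsProbabilityMeasure ν →
      (∀ s : Set Ω, MeasurableSet s → ν (φ ⁻¹' s) = ν s) →
      ν (Prod.fst '' {p : Ω × X | ¬ ContinuousAt Φ p}) = 0)
    (a : ℝ) (f : Ω × X → ℝ) (hfmeas : Measurable f)
    (hfbdd : ∃ C : ℝ, ∀ p, |f p| ≤ C)
    (hf : ∀ μ : Measure (Ω × X), IsProbabilityMeasure μ →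
      (∀ s : Set (Ω × X), MeasurableSet s → μ (Φ ⁻¹' s) = μ s) →
      μ {p : Ω × X | ¬ ContinuousAt f p} = 0 ∧ ∫ p, f p ∂μ ≥ a) :
    ∀ ε > (0 : ℝ), ∃ N : ℕ, ∀ n ≥ N, ∀ p : Ω × X,
      (n : ℝ)⁻¹ * ∑ i ∈ Finset.range n, f (Φ^[i] p) ≥ a - ε := by
  obtain ⟨C, hC⟩ := hfbdd
  intro ε hε
  by_contra hcon
  push Not at hcon
  choose n hn p hp using fun k : ℕ => hcon (k + 1)
  have hnpos : ∀ k, 0 < n k := fun k => by have := hn k; omega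
  let μs : ℕ → ProbabilityMeasure (Ω × X) :=
    fun k => ⟨sptEmp Φ (n k) (p k), sptEmp_prob Φ (n k) (hnpos k) (p k)⟩
  obtain ⟨μ, -, s, hs, hμ⟩ := isCompact_univ.tendsto_subseq (x := μs) (fun _ => Set.mem_univ _)
  have hempInt : ∀ k (g : Ω × X → ℝ), Measurable g → ∫ x, g x ∂(μs k : Measure (Ω × X)) =
      (n k : ℝ)⁻¹ * ∑ i ∈ Finset.range (n k), g (Φ^[i] (p k)) :=
    fun k g hg => sptEmp_integral Φ (n k) (p k) g hg
  have hinv0 : Tendsto (fun k => (n (s k) : ℝ)⁻¹) atTop (𝓝 0) := by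
    apply tendsto_inv_atTop_zero.comp
    apply tendsto_natCast_atTop_atTop.comp
    refine tendsto_atTop_mono (fun k => ?_) tendsto_id
    have h1 := hn (s k)
    have h2 := hs.id_le k
    simp only [id] at h2 ⊢
    omega
  -- asymptotic invariance of the empirical measures
  have L2 : ∀ (g : Ω × X → ℝ) (B : ℝ), Measurable g → (∀ q, |g q| ≤ B) →
      (μ : Measure (Ω × X)) {q | ¬ ContinuousAt g q} = 0 →
      (μ : Measure (Ω × X)) {q | ¬ ContinuousAt (fun q => g (Φ q)) q} = 0 →
      ∫ x, g (Φ x) ∂(μ : Measure (Ω × X)) = ∫ x, g x ∂(μ : Measure (Ω × X)) := by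
    intro g B hg hB h1 h2
    have t1 := spt_tendsto_integral hμ g hg B hB h1
    have t2 := spt_tendsto_integral hμ (fun q => g (Φ q)) (hg.comp hΦmeas) B (fun q => hB _) h2
    have t3 := t2.sub t1
    have t4 : Tendsto (fun k => (n (s k) : ℝ)⁻¹ * (2 * B)) atTop (𝓝 0) := by
      simpa using hinv0.mul_const (2 * B)
    refine sub_eq_zero.1 (tendsto_nhds_unique t3 (squeeze_zero_norm (fun k => ?_) t4))
    · simp only [Function.comp]
      rw [hempInt _ _ hg, hempInt _ (fun q => g (Φ q)) (hg.comp hΦmeas), ← mul_sub, norm_mul,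
        Real.norm_of_nonneg (inv_nonneg.2 (Nat.cast_nonneg _)), ← Finset.sum_sub_distrib]
      refine mul_le_mul_of_nonneg_left ?_ (inv_nonneg.2 (Nat.cast_nonneg _))
      have := Finset.sum_range_sub (fun i => g (Φ^[i] (p (s k)))) (n (s k))
      simp only [Function.iterate_succ_apply'] at this
      rw [this, Real.norm_eq_abs]
      refine (abs_sub _ _).trans ?_
      linarith [hB (Φ^[n (s k)] (p (s k))), hB (Φ^[0] (p (s k)))]
  -- the marginal is invariant
  have hνinv : ((μ : Measure (Ω × X)).map Prod.fst).map φ = (μ : Measure (Ω × X)).map Prod.fst := by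
    have i1 : IsProbabilityMeasure ((μ : Measure (Ω × X)).map Prod.fst) :=
      Measure.isProbabilityMeasure_map measurable_fst.aemeasurable
    have i2 : IsProbabilityMeasure (((μ : Measure (Ω × X)).map Prod.fst).map φ) :=
      Measure.isProbabilityMeasure_map hφ.measurable.aemeasurable
    apply ext_of_forall_integral_eq_of_IsFiniteMeasure
    intro h
    rw [integral_map hφ.measurable.aemeasurable h.continuous.aestronglyMeasurable,
      integral_map measurable_fst.aemeasurable
        (show Continuous fun x => h (φ x) from h.continuous.comp hφ).aestronglyMeasurable,
      integral_map measurable_fst.aemeasurable h.continuous.aestronglyMeasurable]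
    have := L2 (fun q => h q.1) ‖h‖ (h.continuous.measurable.comp measurable_fst)
      (fun q => h.norm_coe_le_norm _) ?_ ?_
    · simpa only [hbase] using this
    · have hc : Continuous (fun q : Ω × X => h q.1) := by fun_prop
      simp [hc.continuousAt]
    · have hc : Continuous (fun q : Ω × X => h (Φ q).1) := by
        simp only [hbase]; fun_prop
      simp [hc.continuousAt]
  have hDΦ : (μ : Measure (Ω × X)) {q | ¬ ContinuousAt Φ q} = 0 := by
    have h0 := hH ((μ : Measure (Ω × X)).map Prod.fst)
      (Measure.isProbabilityMeasure_map measurable_fst.aemeasurable) (fun t ht => by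
        rw [← Measure.map_apply hφ.measurable ht, hνinv])
    refine measure_mono_null (Set.subset_preimage_image Prod.fst _) ?_
    exact le_antisymm ((Measure.le_map_apply measurable_fst.aemeasurable _).trans h0.le) bot_le
  have hμinv : (μ : Measure (Ω × X)).map Φ = (μ : Measure (Ω × X)) := by
    have i2 : IsProbabilityMeasure ((μ : Measure (Ω × X)).map Φ) :=
      Measure.isProbabilityMeasure_map hΦmeas.aemeasurable
    apply ext_of_forall_integral_eq_of_IsFiniteMeasure
    intro h
    rw [integral_map hΦmeas.aemeasurable h.continuous.aestronglyMeasurable]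
    refine L2 h ‖h‖ h.continuous.measurable (fun q => h.norm_coe_le_norm _) ?_ ?_
    · simp [h.continuous.continuousAt]
    · refine measure_mono_null (t := {q | ¬ ContinuousAt Φ q}) (fun q hq hc => hq ?_) hDΦ
      exact ContinuousAt.comp (g := h) h.continuous.continuousAt hc
  obtain ⟨hDf, hfa⟩ := hf μ inferInstance (fun t ht => by
    rw [← Measure.map_apply hΦmeas ht, hμinv])
  have t1 := spt_tendsto_integral hμ f hfmeas C hC hDf
  have := le_of_tendsto t1 (Eventually.of_forall fun k => (by
    simp only [Function.comp]
    rw [hempInt _ _ hfmeas]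
    exact (hp (s k)).le : _ ≤ a - ε))
  linarith
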